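/- arXiv:2101.09602 — 9 statements merged into one kernel-verified Lean document; each statement's English description precedes it below -/
import Mathlib

section
/- Let q be a prime and M2 an integer with q ∤ M2. Then ∑_{v3 ∈ (ℤ/qℤ)ˣ} ∑_{v4 ∈ ℤ/qℤ} e(M2·v3*·v4² / q) = 0, where v3* denotes the multiplicative inverse of v3 modulo q. (This evaluates the Sp(4) Kloosterman sum Kl_{q, s_α s_β s_α}((q,q), M, N) to be 0.) -/
/-- Evaluation of the `Sp(4)` Kloosterman sum `Kl_{q, s_α s_β s_α}((q,q), M, N)`:
for a prime `q` and an integer `M2` with `q ∤ M2`, the exponential sum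
`∑_{v3 ∈ (ℤ/qℤ)ˣ} ∑_{v4 ∈ ℤ/qℤ} e(M2 · v3⁻¹ · v4² / q)` vanishes. -/
theorem sp4_kloosterman_salpha_sbeta_salpha_eval
    (q : ℕ) [Fact q.Prime] (M2 : ℤ) (hM2 : ¬ (q : ℤ) ∣ M2) :
    ∑ v3 : (ZMod q)ˣ, ∑ v4 : ZMod q,
      Complex.exp (2 * Real.pi * Complex.I *
        ((((M2 : ZMod q) * ((v3⁻¹ : (ZMod q)ˣ) : ZMod q) * v4 ^ 2).val : ℂ) / (q : ℂ)))
      = 0 := by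
  have hM : (M2 : ZMod q) ≠ 0 := by
    rwa [Ne, ZMod.intCast_zmod_eq_zero_iff_dvd]
  have key : ∀ x : ZMod q, Complex.exp (2 * Real.pi * Complex.I * ((x.val : ℂ) / (q : ℂ)))
      = ZMod.stdAddChar x := by
    intro x
    rw [ZMod.stdAddChar_apply, ZMod.toCircle_apply]
    congr 1
    ring
  simp only [key]
  set f : ZMod q → ℂ := fun x => ∑ v4 : ZMod q, ZMod.stdAddChar ((M2 : ZMod q) * x * v4 ^ 2)
    with hf
  have h1 : ∑ v3 : (ZMod q)ˣ, f ((v3⁻¹ : (ZMod q)ˣ) : ZMod q) = ∑ u : (ZMod q)ˣ, f u :=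
    Equiv.sum_comp (Equiv.inv (ZMod q)ˣ) (fun u => f (u : ZMod q))
  have h2 : ∑ u : (ZMod q)ˣ, f u = ∑ x ∈ Finset.univ.erase (0 : ZMod q), f x := by
    refine Finset.sum_bij (fun u _ => (u : ZMod q)) ?_ ?_ ?_ ?_
    · intro u _
      simp
    · intro a _ b _ h
      exact Units.ext h
    · intro b hb
      exact ⟨Units.mk0 b (Finset.ne_of_mem_erase hb), Finset.mem_univ _, rfl⟩
    · intros
      rfl
  have h3 : ∑ x, f x = q := by
    simp only [hf]
    rw [Finset.sum_comm, Finset.sum_eq_single 0]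
    · simp [ZMod.card]
    · intro v _ hv
      have := AddChar.sum_mulShift (R := ZMod q) ((M2 : ZMod q) * v ^ 2)
        (ZMod.isPrimitive_stdAddChar q)
      rw [if_neg (mul_ne_zero hM (pow_ne_zero 2 hv))] at this
      rw [Nat.cast_zero] at this
      rw [← this]
      refine Finset.sum_congr rfl fun x _ => ?_
      congr 1
      ring
    · simp
  have h4 : f 0 = q := by simp [hf, ZMod.card]
  have h5 := Finset.add_sum_erase Finset.univ f (Finset.mem_univ (0 : ZMod q))
  change ∑ v3 : (ZMod q)ˣ, f ((v3⁻¹ : (ZMod q)ˣ) : ZMod q) = 0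
  rw [h1, h2]
  rw [h3, h4] at h5
  simpa using h5
end

section
/- Let q be a prime and let M2, N2 be integers coprime to q. Then ∑ e((M2·v14·v34* + N2·v14)/q) = q², where the sum runs over all triples (v13, v14, v23) ∈ (ℤ/qℤ)³ such that (v13, v14) ≠ (0,0) and v34 := −(v13² + v14·v23) ≠ 0 in ℤ/qℤ, and v34* denotes the multiplicative inverse of v34 modulo q. (This evaluates the Sp(4) Kloosterman sum Kl_{q, s_β s_α s_β}((q,q²), M, N) to be q².) -/
theorem kl_aux_ne (q : ℕ) [Fact q.Prime] (M : ℤ) (h : IsCoprime M (q : ℤ)) : (M : ZMod q) ≠ 0 := by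
  intro h0
  obtain ⟨u, v, huv⟩ := h
  have h1 := congrArg (Int.cast : ℤ → ZMod q) huv
  push_cast at h1
  simp [h0] at h1

theorem kl_aux_sum (q : ℕ) [Fact q.Prime] (b : ZMod q) (hb : b ≠ 0) :
    ∑ u : ZMod q, ZMod.stdAddChar (b * u) = (0 : ℂ) := by
  have := AddChar.sum_mulShift b (ZMod.isPrimitive_stdAddChar q)
  simpa [hb, mul_comm] using this

theorem kl_aux_inner (q : ℕ) [Fact q.Prime] (M N : ZMod q) (hM : M ≠ 0) (x a : ZMod q) :
    ∑ z : ZMod q, (if (x ≠ 0 ∨ a ≠ 0) ∧ -(x ^ 2 + a * z) ≠ 0 then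
      ZMod.stdAddChar (M * a * (-(x ^ 2 + a * z))⁻¹ + N * a) else (0 : ℂ))
    = -ZMod.stdAddChar (N * a) + if a = 0 then (1 + if x = 0 then (0 : ℂ) else q) else 0 := by
  by_cases ha : a = 0
  · subst ha
    by_cases hx : x = 0
    · simp [hx]
    · simp [hx, ZMod.card]
  · have hbij : Function.Bijective (fun z : ZMod q => (-(x ^ 2 + a * z))⁻¹) := by
      apply Finite.injective_iff_bijective.1
      intro z w h
      have h1 := neg_injective (inv_injective h)
      exact mul_left_cancel₀ ha (add_left_cancel h1)
    have h1 := hbij.sum_comp (fun u : ZMod q =>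
      if u ≠ 0 then ZMod.stdAddChar (M * a * u + N * a) else (0 : ℂ))
    have h2 : ∀ u : ZMod q, (if u ≠ 0 then ZMod.stdAddChar (M * a * u + N * a) else (0 : ℂ))
        = ZMod.stdAddChar (M * a * u) * ZMod.stdAddChar (N * a)
          - if u = 0 then ZMod.stdAddChar (N * a) else 0 := by
      intro u
      by_cases hu : u = 0
      · simp [hu]
      · simp [hu, AddChar.map_add_eq_mul]
    rw [Finset.sum_congr rfl (fun u _ => h2 u), Finset.sum_sub_distrib, ← Finset.sum_mul,
      kl_aux_sum q _ (mul_ne_zero hM ha)] at h1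
    simp only [ne_eq, inv_eq_zero] at h1
    simp only [ha, ne_eq, not_false_eq_true, or_true, true_and, if_false, add_zero]
    rw [h1]
    simp

/-- Evaluation of the `Sp(4)` Kloosterman sum `Kl_{q, s_β s_α s_β}((q,q²), M, N)`:
for a prime `q` and integers `M2, N2` coprime to `q`, the exponential sum over triples
`(v13, v14, v23) ∈ (ℤ/qℤ)³` with `(v13, v14) ≠ (0,0)` and `v34 := -(v13² + v14·v23) ≠ 0`
of `e((M2·v14·v34⁻¹ + N2·v14)/q)` equals `q²`. -/
theorem sp4_kloosterman_sbeta_salpha_sbeta_eval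
    (q : ℕ) [Fact q.Prime] (M2 N2 : ℤ)
    (hM2 : IsCoprime M2 (q : ℤ)) (hN2 : IsCoprime N2 (q : ℤ)) :
    ∑ v ∈ Finset.univ.filter (fun v : ZMod q × ZMod q × ZMod q =>
        (v.1 ≠ 0 ∨ v.2.1 ≠ 0) ∧ -(v.1 ^ 2 + v.2.1 * v.2.2) ≠ 0),
      Complex.exp (2 * Real.pi * Complex.I *
        ((((M2 : ZMod q) * v.2.1 * (-(v.1 ^ 2 + v.2.1 * v.2.2))⁻¹
            + (N2 : ZMod q) * v.2.1).val : ℂ) / (q : ℂ)))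
      = (q : ℂ) ^ 2 := by
  have hM := kl_aux_ne q M2 hM2
  have hN := kl_aux_ne q N2 hN2
  have he : ∀ t : ZMod q, Complex.exp (2 * Real.pi * Complex.I * ((t.val : ℂ) / (q : ℂ)))
      = ZMod.stdAddChar t := by
    intro t
    rw [ZMod.stdAddChar_apply, ZMod.toCircle_apply, mul_div_assoc]
  simp only [he]
  rw [Finset.sum_filter, Fintype.sum_prod_type]
  simp only [Fintype.sum_prod_type]
  simp only [kl_aux_inner q _ _ hM, Finset.sum_add_distrib, Finset.sum_neg_distrib,
    kl_aux_sum q _ hN, Finset.sum_ite_eq', Finset.mem_univ, if_true]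
  have h3 : ∀ x : ZMod q, (if x = 0 then (0 : ℂ) else q) = q - if x = 0 then (q : ℂ) else 0 := by
    intro x; split_ifs <;> simp
  simp only [h3, Finset.sum_sub_distrib, Finset.sum_ite_eq', Finset.sum_ite_eq, Finset.mem_univ, if_true]
  simp [ZMod.card]
  ring
end

section
/- Let q be a prime and let M2, N2 be integers coprime to q. Then ∑ e((M2·v3·v34* + N2·v14)/q) = 0, where the sum runs over all triples (v3, v4, v14) ∈ (ℤ/qℤ)³ such that (v3, v4) ≠ (0,0) and v34 := v3·v14 − v4² ≠ 0 in ℤ/qℤ, and v34* denotes the multiplicative inverse of v34 modulo q. (This evaluates the Sp(4) Kloosterman sum Kl_{q, w₀}((q,q²), M, N) to be 0, where w₀ is the long Weyl element.) -/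
theorem aux_inner (q : ℕ) [Fact q.Prime] (c : ZMod q) (hc : c ≠ 0) :
    ∑ b : ZMod q, ∑ s : ZMod q, (if s ≠ 0 then ZMod.stdAddChar (N := q) (s * (c * b ^ 2)) else 0)
      = (0 : ℂ) := by
  have hp := ZMod.isPrimitive_stdAddChar q
  have h : ∀ b : ZMod q, ∑ s : ZMod q,
      (if s ≠ 0 then ZMod.stdAddChar (N := q) (s * (c * b ^ 2)) else 0)
      = (if b = 0 then (q : ℂ) else 0) - 1 := by
    intro b
    have h1 := AddChar.sum_mulShift (c * b ^ 2) hp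
    rw [Fintype.sum_eq_add_sum_compl 0] at h1
    rw [Fintype.sum_eq_add_sum_compl 0]
    have h2 : ∑ s ∈ ({0} : Finset (ZMod q))ᶜ,
        (if s ≠ 0 then ZMod.stdAddChar (N := q) (s * (c * b ^ 2)) else 0)
        = ∑ s ∈ ({0} : Finset (ZMod q))ᶜ, ZMod.stdAddChar (N := q) (s * (c * b ^ 2)) := by
      apply Finset.sum_congr rfl
      intro s hs
      have : s ≠ 0 := by simpa using hs
      simp [this]
    rw [h2]
    simp [hc, ZMod.card] at h1 ⊢
    rw [← h1]; ring
  simp_rw [h]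
  simp [ZMod.card]

theorem aux_main (q : ℕ) [Fact q.Prime] (M N : ZMod q) (hN : N ≠ 0) :
    ∑ v ∈ Finset.univ.filter (fun v : ZMod q × ZMod q × ZMod q =>
        (v.1 ≠ 0 ∨ v.2.1 ≠ 0) ∧ v.1 * v.2.2 - v.2.1 ^ 2 ≠ 0),
      ZMod.stdAddChar (N := q) (M * v.1 * (v.1 * v.2.2 - v.2.1 ^ 2)⁻¹ + N * v.2.2) = (0 : ℂ) := by
  have hp := ZMod.isPrimitive_stdAddChar q
  rw [← Finset.sum_filter_add_sum_filter_not _ (fun v => v.1 ≠ 0)]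
  have hA : ∑ v ∈ (Finset.univ.filter (fun v : ZMod q × ZMod q × ZMod q =>
        (v.1 ≠ 0 ∨ v.2.1 ≠ 0) ∧ v.1 * v.2.2 - v.2.1 ^ 2 ≠ 0)).filter (fun v => v.1 ≠ 0),
      ZMod.stdAddChar (N := q) (M * v.1 * (v.1 * v.2.2 - v.2.1 ^ 2)⁻¹ + N * v.2.2) =
      ∑ v ∈ Finset.univ.filter (fun v : ZMod q × ZMod q × ZMod q => v.1 ≠ 0 ∧ v.2.2 ≠ 0),
        (ZMod.stdAddChar (N := q) (M * v.1 + N * v.1⁻¹) *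
          ZMod.stdAddChar (N := q) (v.2.2 * (N * v.1⁻¹ * v.2.1 ^ 2)) : ℂ) := by
    refine Finset.sum_bij'
      (fun v _ => (v.1 * (v.1 * v.2.2 - v.2.1 ^ 2)⁻¹, v.2.1, (v.1 * v.2.2 - v.2.1 ^ 2)⁻¹))
      (fun w _ => (w.1 * w.2.2⁻¹, w.2.1, (1 + w.2.2 * w.2.1 ^ 2) * w.1⁻¹)) ?_ ?_ ?_ ?_ ?_
    · rintro ⟨a, b, x⟩ h
      simp only [Finset.mem_filter, Finset.mem_univ, true_and] at h ⊢
      exact ⟨mul_ne_zero h.2 (inv_ne_zero h.1.2), inv_ne_zero h.1.2⟩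
    · rintro ⟨t, b, s⟩ h
      simp only [Finset.mem_filter, Finset.mem_univ, true_and] at h ⊢
      obtain ⟨ht, hs⟩ := h
      have e : t * s⁻¹ * ((1 + s * b ^ 2) * t⁻¹) - b ^ 2 = s⁻¹ := by field_simp; ring
      rw [e]
      have := mul_ne_zero ht (inv_ne_zero hs)
      exact ⟨⟨Or.inl this, inv_ne_zero hs⟩, this⟩
    · rintro ⟨a, b, x⟩ h
      simp only [Finset.mem_filter, Finset.mem_univ, true_and] at h
      obtain ⟨⟨_, hd⟩, ha⟩ := h
      simp only [Prod.mk.injEq, true_and]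
      constructor
      · field_simp
      · field_simp; ring
    · rintro ⟨t, b, s⟩ h
      simp only [Finset.mem_filter, Finset.mem_univ, true_and] at h
      obtain ⟨ht, hs⟩ := h
      have e : t * s⁻¹ * ((1 + s * b ^ 2) * t⁻¹) - b ^ 2 = s⁻¹ := by field_simp; ring
      simp only [Prod.mk.injEq, true_and, e]
      constructor
      · field_simp
      · simp
    · rintro ⟨a, b, x⟩ h
      simp only [Finset.mem_filter, Finset.mem_univ, true_and] at h
      obtain ⟨⟨_, hd⟩, ha⟩ := h
      rw [← AddChar.map_add_eq_mul]
      congr 1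
      simp only
      field_simp
      ring
  rw [hA]
  have hA0 : ∑ v ∈ Finset.univ.filter (fun v : ZMod q × ZMod q × ZMod q => v.1 ≠ 0 ∧ v.2.2 ≠ 0),
        (ZMod.stdAddChar (N := q) (M * v.1 + N * v.1⁻¹) *
          ZMod.stdAddChar (N := q) (v.2.2 * (N * v.1⁻¹ * v.2.1 ^ 2)) : ℂ) = 0 := by
    rw [Finset.sum_filter, Fintype.sum_prod_type]
    apply Finset.sum_eq_zero
    intro t _
    rw [Fintype.sum_prod_type]
    by_cases ht : t = 0
    · simp [ht]
    · have := aux_inner q (N * t⁻¹) (mul_ne_zero hN (inv_ne_zero ht))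
      refine Eq.trans ?_ ((congrArg (fun z => ZMod.stdAddChar (N := q) (M * t + N * t⁻¹) * z)
        this).trans (mul_zero _))
      simp only []
      rw [Finset.mul_sum]
      apply Finset.sum_congr rfl
      intro b _
      rw [Finset.mul_sum]
      apply Finset.sum_congr rfl
      intro s _
      by_cases hs : s = 0 <;> simp [hs, ht]
  rw [hA0, zero_add, Finset.filter_filter, Finset.sum_filter, Fintype.sum_prod_type]
  apply Finset.sum_eq_zero
  intro a _
  rw [Fintype.sum_prod_type]
  apply Finset.sum_eq_zero
  intro b _
  by_cases ha : a = 0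
  · by_cases hb : b = 0
    · simp [ha, hb]
    · have h1 := AddChar.sum_mulShift N hp
      simp only [hN, if_false] at h1
      simpa [ha, hb, mul_comm] using h1
  · simp [ha]


/-- Evaluation of the `Sp(4)` Kloosterman sum `Kl_{q, w₀}((q,q²), M, N)`:
for a prime `q` and integers `M2, N2` coprime to `q`, the exponential sum over triples
`(v3, v4, v14) ∈ (ℤ/qℤ)³` with `(v3, v4) ≠ (0,0)` and `v34 := v3·v14 - v4² ≠ 0`
of `e((M2·v3·v34⁻¹ + N2·v14)/q)` vanishes. -/
theorem sp4_kloosterman_w0_qq2_eval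
    (q : ℕ) [Fact q.Prime] (M2 N2 : ℤ)
    (hM2 : IsCoprime M2 (q : ℤ)) (hN2 : IsCoprime N2 (q : ℤ)) :
    ∑ v ∈ Finset.univ.filter (fun v : ZMod q × ZMod q × ZMod q =>
        (v.1 ≠ 0 ∨ v.2.1 ≠ 0) ∧ v.1 * v.2.2 - v.2.1 ^ 2 ≠ 0),
      Complex.exp (2 * Real.pi * Complex.I *
        ((((M2 : ZMod q) * v.1 * (v.1 * v.2.2 - v.2.1 ^ 2)⁻¹
            + (N2 : ZMod q) * v.2.2).val : ℂ) / (q : ℂ)))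
      = 0 := by
  have hN : (N2 : ZMod q) ≠ 0 := by
    obtain ⟨a, b, h⟩ := hN2
    intro h0
    have := congrArg (Int.cast : ℤ → ZMod q) h
    simp [h0] at this
  rw [← aux_main q (M2 : ZMod q) (N2 : ZMod q) hN]
  apply Finset.sum_congr rfl
  intro v _
  rw [ZMod.stdAddChar_apply, ZMod.toCircle_apply, mul_div_assoc]
end

section
/- Let q be a prime and let M2, N2 be integers coprime to q. Then ∑ exp(2πi·(M2·v3·w + N2·v14)/q²) = 0, where the sum runs over all integer triples (v3, v4, v14) with 0 ≤ v3, v4 < q, 0 ≤ v14 < q², such that q does not divide both v3 and v4, and such that v34 := v3·v14 − v4²·q is coprime to q; here w denotes any integer with v34·w ≡ 1 (mod q²) (the summand is independent of this choice). (This evaluates the Sp(4) Kloosterman sum Kl_{q, w₀}((q,q³), M, N) to be 0, where w₀ is the long Weyl element.) -/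
lemma kl_sum_range (q : ℕ) [NeZero q] (f : ZMod q → ℂ) :
    ∑ i ∈ Finset.range q, f (i : ZMod q) = ∑ x : ZMod q, f x := by
  refine Finset.sum_bij' (fun i _ => (i : ZMod q)) (fun x _ => x.val) ?_ ?_ ?_ ?_ ?_
  · intros; simp
  · intro x _; simpa using ZMod.val_lt x
  · intro i hi; exact ZMod.val_cast_of_lt (by simpa using hi)
  · intro x _; simp
  · intros; rfl

lemma kl_inner (q : ℕ) [Fact q.Prime] (c : ZMod q) (hc : c ≠ 0) :
    ∑ y : ZMod q, ∑ x : ZMod q,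
      (if x = 0 then (0 : ℂ) else ZMod.stdAddChar (c * y ^ 2 * x⁻¹)) = 0 := by
  have key : ∀ y : ZMod q, ∑ x : ZMod q,
      (if x = 0 then (0 : ℂ) else ZMod.stdAddChar (c * y ^ 2 * x⁻¹))
      = (if y = 0 then (q : ℂ) else 0) - 1 := by
    intro y
    have h1 : ∀ x : ZMod q, (if x = 0 then (0 : ℂ) else ZMod.stdAddChar (c * y ^ 2 * x⁻¹))
        = ZMod.stdAddChar (c * y ^ 2 * x⁻¹) - (if x = 0 then 1 else 0) := by
      intro x
      by_cases hx : x = 0 <;> simp [hx]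
    simp_rw [h1]
    rw [Finset.sum_sub_distrib]
    congr 1
    · have h2 := Equiv.sum_comp (Equiv.inv (ZMod q))
        (fun x => (ZMod.stdAddChar (c * y ^ 2 * x) : ℂ))
      simp only [Equiv.inv_apply] at h2
      rw [h2]
      have h3 := AddChar.sum_mulShift (c * y ^ 2) (ZMod.isPrimitive_stdAddChar q)
      simp_rw [mul_comm (c * y ^ 2)]
      rw [h3]
      by_cases hy : y = 0 <;> simp [hy, hc, ZMod.card]
    · simp
  simp_rw [key]
  simp [ZMod.card]

lemma kl_exp_congr (q : ℕ) (hq : 0 < q) (a b : ℤ) (h : a ≡ b [ZMOD ((q : ℤ) ^ 2)]) :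
    Complex.exp (2 * Real.pi * Complex.I * ((a : ℂ) / (q : ℂ) ^ 2)) =
    Complex.exp (2 * Real.pi * Complex.I * ((b : ℂ) / (q : ℂ) ^ 2)) := by
  obtain ⟨k, hk⟩ := h.dvd
  have hb : b = a + (q : ℤ) ^ 2 * k := by linarith
  rw [hb, Complex.exp_eq_exp_iff_exists_int]
  have : (q : ℂ) ≠ 0 := by exact_mod_cast hq.ne'
  refine ⟨-k, ?_⟩
  push_cast
  field_simp
  ring

/-- Evaluation of the `Sp(4)` Kloosterman sum `Kl_{q, w₀}((q,q³), M, N)`: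
for a prime `q` and integers `M2, N2` coprime to `q`, the exponential sum
`∑ exp(2πi·(M2·v3·w + N2·v14)/q²)` over integer triples `(v3, v4, v14)` with
`0 ≤ v3, v4 < q`, `0 ≤ v14 < q²`, with `q` not dividing both `v3` and `v4`,
and `v34 := v3·v14 − v4²·q` coprime to `q`, vanishes; here `W v3 v4 v14` is any
integer inverse of `v34` modulo `q²`. -/
theorem sp4_kloosterman_w0_qq3_eval
    (q : ℕ) (hq : q.Prime) (M2 N2 : ℤ)
    (hM2 : IsCoprime M2 (q : ℤ)) (hN2 : IsCoprime N2 (q : ℤ))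
    (W : ℕ → ℕ → ℕ → ℤ)
    (hW : ∀ v3 v4 v14 : ℕ, v3 < q → v4 < q → v14 < q ^ 2 →
      Int.gcd ((v3 : ℤ) * v14 - (v4 : ℤ) ^ 2 * q) q = 1 →
      ((v3 : ℤ) * v14 - (v4 : ℤ) ^ 2 * q) * W v3 v4 v14 ≡ 1 [ZMOD ((q : ℤ) ^ 2)]) :
    ∑ v3 ∈ Finset.range q, ∑ v4 ∈ Finset.range q, ∑ v14 ∈ Finset.range (q ^ 2),
      (if ¬(q ∣ v3 ∧ q ∣ v4) ∧ Int.gcd ((v3 : ℤ) * v14 - (v4 : ℤ) ^ 2 * q) q = 1 then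
        Complex.exp (2 * Real.pi * Complex.I *
          (((M2 * v3 * W v3 v4 v14 + N2 * v14 : ℤ) : ℂ) / (q : ℂ) ^ 2))
      else 0)
      = 0 := by
  haveI : Fact q.Prime := ⟨hq⟩
  haveI : NeZero q := ⟨hq.ne_zero⟩
  have hqC : (q : ℂ) ≠ 0 := by exact_mod_cast hq.ne_zero
  have hcop : ∀ v3 v4 v14 : ℕ, Int.gcd ((v3 : ℤ) * v14 - (v4 : ℤ) ^ 2 * q) q = 1 ↔
      ((v3 : ZMod q) ≠ 0 ∧ (v14 : ZMod q) ≠ 0) := by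
    intro v3 v4 v14
    rw [← Int.isCoprime_iff_gcd_eq_one, isCoprime_comm,
      (Nat.prime_iff_prime_int.mp hq).coprime_iff_not_dvd, ← ZMod.intCast_zmod_eq_zero_iff_dvd]
    push_cast
    simp [not_or]
  have hz : ∀ v : ℕ, q ∣ v ↔ (v : ZMod q) = 0 := fun v => (ZMod.natCast_eq_zero_iff v q).symm
  have hM : (M2 : ZMod q) ≠ 0 := by
    intro h
    rw [ZMod.intCast_zmod_eq_zero_iff_dvd] at h
    exact (Nat.prime_iff_prime_int.mp hq).not_unit (hM2.isUnit_of_dvd' h dvd_rfl)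
  simp_rw [hcop, hz]
  have hinv : ∀ v : ℕ, (v : ZMod q) ≠ 0 → ∃ u : ℤ, (v : ℤ) * u ≡ 1 [ZMOD ((q : ℤ) ^ 2)] := by
    intro v hv
    have h1 : IsCoprime (v : ℤ) ((q : ℤ) ^ 2) := by
      apply IsCoprime.pow_right
      rw [isCoprime_comm, (Nat.prime_iff_prime_int.mp hq).coprime_iff_not_dvd,
        ← ZMod.intCast_zmod_eq_zero_iff_dvd]
      simpa using hv
    obtain ⟨a, b, hab⟩ := h1
    refine ⟨a, ?_⟩
    rw [Int.modEq_iff_dvd]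
    exact ⟨b, by linarith⟩
  rw [Finset.sum_congr rfl (fun v3 _ => Finset.sum_comm), Finset.sum_comm]
  apply Finset.sum_eq_zero
  intro v14 h14
  rw [Finset.mem_range] at h14
  by_cases hv : (v14 : ZMod q) = 0
  · simp [hv]
  obtain ⟨u, hu⟩ := hinv v14 hv
  have hu0 : (u : ZMod q) ≠ 0 := by
    intro h
    have h2 : (v14 : ℤ) * u ≡ 1 [ZMOD (q : ℤ)] := hu.of_dvd (dvd_pow_self _ two_ne_zero)
    rw [← ZMod.intCast_eq_intCast_iff] at h2
    push_cast at h2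
    simp [h] at h2
  set c : ZMod q := M2 * u ^ 2 with hc
  have hc0 : c ≠ 0 := mul_ne_zero hM (pow_ne_zero _ hu0)
  have hterm : ∀ v3 ∈ Finset.range q, ∀ v4 ∈ Finset.range q,
      (if ¬((v3 : ZMod q) = 0 ∧ (v4 : ZMod q) = 0) ∧ (v3 : ZMod q) ≠ 0 ∧ (v14 : ZMod q) ≠ 0 then
        Complex.exp (2 * Real.pi * Complex.I *
          (((M2 * v3 * W v3 v4 v14 + N2 * v14 : ℤ) : ℂ) / (q : ℂ) ^ 2))
      else 0) =
      Complex.exp (2 * Real.pi * Complex.I * (((M2 * u + N2 * v14 : ℤ) : ℂ) / (q : ℂ) ^ 2)) *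
      (if (v3 : ZMod q) = 0 then (0 : ℂ) else
        ZMod.stdAddChar (c * (v4 : ZMod q) ^ 2 * (v3 : ZMod q)⁻¹)) := by
    intro v3 h3 v4 h4
    rw [Finset.mem_range] at h3 h4
    by_cases hv3 : (v3 : ZMod q) = 0
    · simp [hv3]
    rw [if_pos ⟨fun h => hv3 h.1, hv3, hv⟩, if_neg hv3]
    obtain ⟨t, ht⟩ := hinv v3 hv3
    have hw := hW v3 v4 v14 h3 h4 h14 ((hcop v3 v4 v14).2 ⟨hv3, hv⟩)
    have hcast : c * (v4 : ZMod q) ^ 2 * (v3 : ZMod q)⁻¹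
        = ((M2 * u ^ 2 * (v4 : ℤ) ^ 2 * t : ℤ) : ZMod q) := by
      have h2 : (v3 : ℤ) * t ≡ 1 [ZMOD (q : ℤ)] := ht.of_dvd (dvd_pow_self _ two_ne_zero)
      rw [← ZMod.intCast_eq_intCast_iff] at h2
      push_cast at h2
      rw [inv_eq_of_mul_eq_one_right h2, hc]
      push_cast
      ring
    rw [hcast, ZMod.stdAddChar_coe, ← Complex.exp_add]
    have hmod : M2 * v3 * W v3 v4 v14 + N2 * v14 ≡
        M2 * u + N2 * v14 + q * (M2 * u ^ 2 * (v4 : ℤ) ^ 2 * t) [ZMOD ((q : ℤ) ^ 2)] := by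
      obtain ⟨a, ha⟩ := hu.dvd
      obtain ⟨b, hb⟩ := ht.dvd
      obtain ⟨d, hd⟩ := hw.dvd
      have e1 : (v14 : ZMod (q^2)) * u = 1 := by
        have := (ZMod.intCast_eq_intCast_iff _ _ (q^2)).2 (by push_cast; exact hu)
        push_cast at this; exact this
      have e2 : (v3 : ZMod (q^2)) * t = 1 := by
        have := (ZMod.intCast_eq_intCast_iff _ _ (q^2)).2 (by push_cast; exact ht)
        push_cast at this; exact this
      have e3 : ((v3 : ZMod (q^2)) * v14 - (v4 : ZMod (q^2)) ^ 2 * q)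
          * (W v3 v4 v14 : ZMod (q^2)) = 1 := by
        have := (ZMod.intCast_eq_intCast_iff _ _ (q^2)).2 (by push_cast; exact hw)
        push_cast at this; exact this
      have e4 : (q : ZMod (q^2)) ^ 2 = 0 := by
        have := ZMod.natCast_self (q^2)
        push_cast at this; exact this
      have hgoal := (ZMod.intCast_eq_intCast_iff (M2 * v3 * W v3 v4 v14 + N2 * v14)
        (M2 * u + N2 * v14 + q * (M2 * u ^ 2 * (v4 : ℤ) ^ 2 * t)) (q^2)).1
      push_cast at hgoal
      apply hgoal
      generalize (W v3 v4 v14 : ZMod (q^2)) = w at *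
      generalize (v3 : ZMod (q^2)) = x at *
      generalize (v4 : ZMod (q^2)) = y at *
      generalize (v14 : ZMod (q^2)) = z at *
      generalize (q : ZMod (q^2)) = Q at *
      generalize (u : ZMod (q^2)) = U at *
      generalize (t : ZMod (q^2)) = T at *
      have e5 : (x * z - y ^ 2 * Q) * (U + Q * y ^ 2 * T * U ^ 2) = x := by
        linear_combination (x + x * T * Q * y ^ 2 * U) * e1 + Q * y ^ 2 * U * e2
          - y ^ 4 * T * U ^ 2 * e4
      have e6 : x * w = U + Q * y ^ 2 * T * U ^ 2 := by
        linear_combination (-w) * e5 + (U + Q * y ^ 2 * T * U ^ 2) * e3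
      linear_combination (M2 : ZMod (q^2)) * e6
    rw [kl_exp_congr q hq.pos _ _ hmod]
    congr 1
    push_cast
    field_simp
  rw [Finset.sum_comm]
  rw [Finset.sum_comm, Finset.sum_congr rfl (fun v3 h3 => Finset.sum_congr rfl (hterm v3 h3))]
  simp_rw [← Finset.mul_sum]
  rw [Finset.sum_comm]
  have h1 := kl_inner q c hc0
  rw [← kl_sum_range] at h1
  simp_rw [← kl_sum_range q (fun x => if x = 0 then (0 : ℂ) else
        ZMod.stdAddChar (c * _ ^ 2 * x⁻¹))] at h1
  rw [h1, mul_zero]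
end

section
/- Let q be a prime, let v4 be an integer with q ∤ v4, and let v14 be an integer with q ∤ v14. Then the map f: {1, 2, …, q−1} → ℤ/q²ℤ defined by f(v3) = v3·(v3·v14 − v4²·q)⁻¹ (the inverse taken in (ℤ/q²ℤ)ˣ) is injective, and its image is exactly the set {s ∈ (ℤ/q²ℤ)ˣ : v14·s ≡ 1 (mod q)} ∖ {u}, where u ∈ (ℤ/q²ℤ)ˣ is the inverse of v14 modulo q². -/
theorem aux_unit (q : ℕ) (hq : q.Prime) (a : ℤ) :
    IsUnit (a : ZMod (q ^ 2)) ↔ ¬ (q : ℤ) ∣ a := by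
  rw [ZMod.coe_int_isUnit_iff_isCoprime]
  push_cast
  rw [IsCoprime.pow_left_iff (by norm_num), (Nat.prime_iff_prime_int.mp hq).coprime_iff_not_dvd]

theorem aux_eq (q : ℕ) (a b : ℤ) :
    (a : ZMod (q ^ 2)) = b ↔ (q : ℤ) ^ 2 ∣ a - b := by
  rw [eq_comm, ZMod.intCast_eq_intCast_iff_dvd_sub]
  push_cast
  rfl

theorem aux_inv (n : ℕ) (a d s : ZMod n) (hd : IsUnit d) : a * d⁻¹ = s ↔ a = s * d := by
  have h1 : d * d⁻¹ = 1 := ZMod.mul_inv_of_unit d hd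
  constructor
  · rintro rfl
    linear_combination (-a) * h1
  · rintro rfl
    linear_combination s * h1

/-- For a prime `q` and integers `v4, v14` coprime to `q`, the map
`f(v3) = v3·(v3·v14 − v4²·q)⁻¹` (inverse taken mod `q²`) is injective on
`{1, …, q−1}`, and its image is exactly the set of units `s` mod `q²` with
`v14·s ≡ 1 (mod q)`, minus the inverse `u` of `v14` modulo `q²`. -/
theorem sp4_w0_qq3_residue_bijection
    (q : ℕ) (hq : q.Prime) (v4 v14 : ℤ)
    (hv4 : ¬ (q : ℤ) ∣ v4) (hv14 : ¬ (q : ℤ) ∣ v14) :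
    Set.InjOn (fun v3 : ℤ =>
        ((v3 : ZMod (q ^ 2)) * (((v3 * v14 - v4 ^ 2 * q : ℤ) : ZMod (q ^ 2)))⁻¹))
      (Set.Icc 1 ((q : ℤ) - 1)) ∧
    (fun v3 : ℤ =>
        ((v3 : ZMod (q ^ 2)) * (((v3 * v14 - v4 ^ 2 * q : ℤ) : ZMod (q ^ 2)))⁻¹)) ''
        (Set.Icc 1 ((q : ℤ) - 1)) =
      {s : ZMod (q ^ 2) | IsUnit s ∧
          ZMod.castHom (dvd_pow_self q (by norm_num : (2 : ℕ) ≠ 0)) (ZMod q)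
            ((v14 : ZMod (q ^ 2)) * s) = 1}
        \ {(((v14 : ZMod (q ^ 2)))⁻¹)} := by
  have hp := Nat.prime_iff_prime_int.mp hq
  have hq0 : (q : ℤ) ≠ 0 := hp.ne_zero
  have hxq : ∀ x ∈ Set.Icc (1 : ℤ) ((q : ℤ) - 1), ¬ (q : ℤ) ∣ x := by
    rintro x ⟨h1, h2⟩ h
    have := Int.le_of_dvd (by omega) h
    omega
  have hdq : ∀ x ∈ Set.Icc (1 : ℤ) ((q : ℤ) - 1), ¬ (q : ℤ) ∣ x * v14 - v4 ^ 2 * q := by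
    intro x hx h
    have h' : (q : ℤ) ∣ x * v14 := (dvd_sub_left (dvd_mul_left _ _)).mp h
    exact (hp.dvd_or_dvd h').elim (hxq x hx) hv14
  have hdu := fun x hx => (aux_unit q hq _).mpr (hdq x hx)
  have h14u := (aux_unit q hq _).mpr hv14
  have h14i := ZMod.mul_inv_of_unit _ h14u
  have hcancel : ∀ a : ℤ, (q : ℤ) ^ 2 ∣ q * a ↔ (q : ℤ) ∣ a := by
    intro a
    rw [pow_two]
    exact mul_dvd_mul_iff_left hq0
  have hv42 : ¬ (q : ℤ) ∣ v4 ^ 2 := fun h => hv4 (hp.dvd_of_dvd_pow h)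
  refine ⟨?_, ?_⟩
  · intro x hx y hy hxy
    simp only at hxy
    rw [aux_inv _ _ _ _ (hdu x hx), mul_right_comm, eq_comm, mul_right_comm,
      ] at hxy
    have hyi := ZMod.mul_inv_of_unit _ (hdu y hy)
    have e : ((y * (x * v14 - v4 ^ 2 * q) : ℤ) : ZMod (q ^ 2)) =
        ((x * (y * v14 - v4 ^ 2 * q) : ℤ) : ZMod (q ^ 2)) := by
      rw [Int.cast_mul, Int.cast_mul]
      linear_combination (((y * v14 - v4 ^ 2 * q : ℤ) : ZMod (q ^ 2))) * hxy -
        (y : ZMod (q ^ 2)) * ((x * v14 - v4 ^ 2 * q : ℤ) : ZMod (q ^ 2)) * hyi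
    rw [aux_eq, show y * (x * v14 - v4 ^ 2 * q) - x * (y * v14 - v4 ^ 2 * q)
      = q * (v4 ^ 2 * (x - y)) by ring, hcancel] at e
    have e2 := (hp.dvd_or_dvd e).resolve_left hv42
    have := Int.eq_zero_of_abs_lt_dvd e2 (by
      obtain ⟨h1, h2⟩ := hx
      obtain ⟨h3, h4⟩ := hy
      rw [abs_lt]; constructor <;> omega)
    omega
  · ext s
    simp only [Set.mem_image, Set.mem_diff, Set.mem_setOf_eq, Set.mem_singleton_iff]
    constructor
    · rintro ⟨x, hx, h⟩
      rw [aux_inv _ _ _ _ (hdu x hx)] at h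
      have hxu := (aux_unit q hq _).mpr (hxq x hx)
      refine ⟨⟨?_, ?_⟩, ?_⟩
      · rw [h] at hxu
        exact isUnit_of_mul_isUnit_left hxu
      · set φ := ZMod.castHom (dvd_pow_self q (by norm_num : (2 : ℕ) ≠ 0)) (ZMod q) with hφ
        have hd := (hdu x hx).map φ
        have h2 := congrArg φ h
        have h3 : φ ((x * v14 - v4 ^ 2 * q : ℤ) : ZMod (q ^ 2)) = φ x * φ v14 := by
          simp
        rw [map_mul] at h2
        apply hd.mul_right_cancel
        rw [map_mul, one_mul]
        linear_combination (-φ v14) * h2 - h3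
      · rintro rfl
        have e : ((q * v4 ^ 2 : ℤ) : ZMod (q ^ 2)) = ((0 : ℤ) : ZMod (q ^ 2)) := by
          push_cast at h ⊢
          linear_combination (v14 : ZMod (q ^ 2)) * h + (x * v14 - v4 ^ 2 * q) * h14i
        rw [aux_eq, sub_zero, hcancel] at e
        exact hv42 e
    · rintro ⟨⟨hs, h1⟩, hne⟩
      obtain ⟨t, rfl⟩ := ZMod.intCast_surjective s
      have htq := (aux_unit q hq _).mp hs
      rw [← Int.cast_mul, map_intCast, ← Int.cast_one, eq_comm,
        ZMod.intCast_eq_intCast_iff_dvd_sub] at h1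
      obtain ⟨k, hk⟩ := h1
      have hkq : ¬ (q : ℤ) ∣ k := by
        rw [← hcancel, ← hk, ← aux_eq]
        intro h
        apply hne
        push_cast at h
        linear_combination ((v14 : ZMod (q ^ 2)))⁻¹ * h - t * h14i
      obtain ⟨a, b, hab⟩ := (hp.coprime_iff_not_dvd.mpr hkq)
      have hx : (t * v4 ^ 2 * b) % q ∈ Set.Icc (1 : ℤ) ((q : ℤ) - 1) := by
        have h1 := Int.emod_nonneg (t * v4 ^ 2 * b) hq0
        have h2 := Int.emod_lt_of_pos (t * v4 ^ 2 * b) (by have := hq.pos; omega : (0 : ℤ) < q)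
        have h3 : (t * v4 ^ 2 * b) % q ≠ 0 := by
          intro h
          have h := Int.dvd_of_emod_eq_zero h
          rcases hp.dvd_or_dvd h with h | h
          · exact (hp.dvd_or_dvd h).elim htq hv42
          · apply hp.not_dvd_one
            rw [← hab]
            exact dvd_add (dvd_mul_left _ _) (dvd_mul_of_dvd_left h _)
        constructor <;> omega
      refine ⟨_, hx, ?_⟩
      rw [aux_inv _ _ _ _ (hdu _ hx), ← Int.cast_mul, eq_comm, aux_eq]
      have hm := Int.emod_add_mul_ediv (t * v4 ^ 2 * b) q
      generalize (t * v4 ^ 2 * b) % q = x at *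
      generalize (t * v4 ^ 2 * b) / q = c at *
      have : t * (x * v14 - v4 ^ 2 * q) - x = q * (q * (-c * k - t * v4 ^ 2 * a)) := by
        linear_combination x * hk + q * k * hm + q * t * v4 ^ 2 * hab
      rw [this, hcancel]
      exact dvd_mul_right _ _
end

section
/- For every ε > 0 there is a constant C(ε) > 0 with the following property. For (x13, x23, x24) ∈ ℝ³ define the row vectors r₃ = (0, 1, x23, x24) and r₄ = (−1, 0, −x13, −x23) in ℝ⁴, and set Δ₁(x) = ‖r₃‖ (Euclidean norm) and Δ₂(x) = √(‖r₃‖²·‖r₄‖² − ⟨r₃, r₄⟩²) (the area of the parallelogram spanned by r₃ and r₄). Then for all B₁, B₂ > 0, the Lebesgue measure of the set {(x13, x23, x24) ∈ ℝ³ : Δ₁(x) ≤ B₁ and Δ₂(x) ≤ B₂} is at most C(ε)·(B₁·B₂)^{1+ε}. -/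
open MeasureTheory

lemma sp4_aux_int (B : ℝ) (hB : 1 ≤ B) :
    ∫⁻ c in Set.Icc (-B) B, ENNReal.ofReal ((√(1 + c ^ 2))⁻¹) =
      ENNReal.ofReal (2 * Real.arsinh B) := by
  have hpos : ∀ c : ℝ, 0 < √(1 + c ^ 2) := fun c => Real.sqrt_pos.2 (by positivity)
  have hcont : Continuous (fun c : ℝ => (√(1 + c ^ 2))⁻¹) := by
    apply Continuous.inv₀ (by fun_prop)
    intro c; exact (hpos c).ne'
  rw [← ofReal_integral_eq_lintegral_ofReal]
  · rw [integral_Icc_eq_integral_Ioc, ← intervalIntegral.integral_of_le (by linarith),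
      intervalIntegral.integral_eq_sub_of_hasDerivAt (f := Real.arsinh)]
    · rw [Real.arsinh_neg]; congr 1; ring
    · intro x _; exact Real.hasDerivAt_arsinh x
    · exact hcont.intervalIntegrable _ _
  · exact hcont.continuousOn.integrableOn_compact isCompact_Icc
  · exact Filter.Eventually.of_forall fun c => inv_nonneg.2 (hpos c).le

lemma sp4_aux_arsinh (ε B : ℝ) (hε : 0 < ε) (hB : 1 ≤ B) :
    Real.arsinh B ≤ 3 ^ ε / ε * B ^ ε := by
  have h1 : √(1 + B ^ 2) ≤ 2 * B := by
    rw [Real.sqrt_le_left (by linarith)]; nlinarith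
  have h0 : 0 ≤ √(1 + B ^ 2) := Real.sqrt_nonneg _
  calc Real.arsinh B = Real.log (B + √(1 + B ^ 2)) := rfl
    _ ≤ Real.log (3 * B) := Real.log_le_log (by linarith) (by linarith)
    _ ≤ (3 * B) ^ ε / ε := Real.log_le_rpow_div (by linarith) hε
    _ = _ := by rw [Real.mul_rpow (by norm_num) (by linarith)]; ring

lemma sp4_aux_section (a b c B : ℝ) (hB : 0 < B)
    (h : a ^ 2 + (a * c - b ^ 2) ^ 2 ≤ B ^ 2) :
    |a - c * b ^ 2 / (1 + c ^ 2)| ≤ B * (√(1 + c ^ 2))⁻¹ := by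
  have hp : 0 < 1 + c ^ 2 := by positivity
  apply abs_le_of_sq_le_sq _ (by positivity)
  rw [mul_pow, inv_pow, Real.sq_sqrt hp.le, ← div_eq_mul_inv, le_div_iff₀ hp]
  have : (a - c * b ^ 2 / (1 + c ^ 2)) ^ 2 * (1 + c ^ 2)
      = a ^ 2 + (a * c - b ^ 2) ^ 2 - b ^ 4 / (1 + c ^ 2) := by
    field_simp; ring
  have : 0 ≤ b ^ 4 / (1 + c ^ 2) := by positivity
  linarith

lemma sp4_aux_vol (B₁ B₂ : ℝ) (h1 : 1 ≤ B₁) (h2 : 0 < B₂) :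
    volume {x : ℝ × ℝ × ℝ | x.2.1 ∈ Set.Icc (-B₁) B₁ ∧ x.2.2 ∈ Set.Icc (-B₁) B₁ ∧
      |x.1 - x.2.2 * x.2.1 ^ 2 / (1 + x.2.2 ^ 2)| ≤ B₂ * (√(1 + x.2.2 ^ 2))⁻¹} ≤
    ENNReal.ofReal (2 * B₁ * (2 * B₂) * (2 * Real.arsinh B₁)) := by
  set T := {x : ℝ × ℝ × ℝ | x.2.1 ∈ Set.Icc (-B₁) B₁ ∧ x.2.2 ∈ Set.Icc (-B₁) B₁ ∧
      |x.1 - x.2.2 * x.2.1 ^ 2 / (1 + x.2.2 ^ 2)| ≤ B₂ * (√(1 + x.2.2 ^ 2))⁻¹} with hT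
  have hm : MeasurableSet T := by
    refine MeasurableSet.inter (measurableSet_Icc.preimage (by fun_prop))
      (MeasurableSet.inter (measurableSet_Icc.preimage (by fun_prop)) ?_)
    exact measurableSet_le
      (f := fun x : ℝ × ℝ × ℝ => |x.1 - x.2.2 * x.2.1 ^ 2 / (1 + x.2.2 ^ 2)|)
      (g := fun x : ℝ × ℝ × ℝ => B₂ * (√(1 + x.2.2 ^ 2))⁻¹)
      (Measurable.abs (by fun_prop)) (by fun_prop)
  have hg : Measurable (fun c : ℝ => ENNReal.ofReal ((√(1 + c ^ 2))⁻¹)) := by fun_prop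
  let f : ℝ → ENNReal := (Set.Icc (-B₁) B₁).indicator (fun _ => ENNReal.ofReal (2 * B₂))
  let g : ℝ → ENNReal :=
    (Set.Icc (-B₁) B₁).indicator (fun c => ENNReal.ofReal ((√(1 + c ^ 2))⁻¹))
  rw [Measure.volume_eq_prod, Measure.prod_apply_symm hm]
  calc _ ≤ ∫⁻ y : ℝ × ℝ, f y.1 * g y.2 ∂(volume.prod volume) := by
        rw [← Measure.volume_eq_prod]
        apply lintegral_mono
        rintro ⟨b, c⟩
        by_cases hb : b ∈ Set.Icc (-B₁) B₁
        · by_cases hc : c ∈ Set.Icc (-B₁) B₁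
          · simp only [f, g, Set.indicator_of_mem hb, Set.indicator_of_mem hc]
            rw [← ENNReal.ofReal_mul (by positivity), mul_assoc, ← Real.volume_closedBall
              (c * b ^ 2 / (1 + c ^ 2))]
            apply measure_mono
            rintro a ⟨_, _, h⟩
            simpa [Real.dist_eq] using h
          · have : (fun x : ℝ => (x, (b, c))) ⁻¹' T = ∅ := by
              ext a; simp only [Set.mem_preimage, hT, Set.mem_ofPred_eq, hc]; simp
            simp [this]
        · have : (fun x : ℝ => (x, (b, c))) ⁻¹' T = ∅ := by
            ext a; simp only [Set.mem_preimage, hT, Set.mem_ofPred_eq, hb]; simp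
          simp [this]
    _ = (∫⁻ b, f b) * ∫⁻ c, g c := by
        apply lintegral_prod_mul
        · exact (measurable_const.indicator measurableSet_Icc).aemeasurable
        · exact (hg.indicator measurableSet_Icc).aemeasurable
    _ = _ := by
        simp only [f, g]
        rw [lintegral_indicator measurableSet_Icc, lintegral_indicator measurableSet_Icc,
          sp4_aux_int B₁ h1, setLIntegral_const, Real.volume_Icc,
          ← ENNReal.ofReal_mul (by positivity), ← ENNReal.ofReal_mul]
        · congr 1; ring
        · apply mul_nonneg <;> linarith
    _ ≤ _ := le_rfl


/-- For every `ε > 0` there is `C(ε) > 0` such that for all `B₁, B₂ > 0`, the Lebesgue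
measure of the set of `(x13, x23, x24) ∈ ℝ³` with `Δ₁ ≤ B₁` and `Δ₂ ≤ B₂` is at most
`C·(B₁B₂)^{1+ε}`, where `Δ₁` is the Euclidean norm of `r₃ = (0,1,x23,x24)` and `Δ₂` is
the area of the parallelogram spanned by `r₃` and `r₄ = (−1,0,−x13,−x23)`. -/
theorem sp4_unipotent_volume_bound :
    ∀ ε : ℝ, 0 < ε → ∃ C : ℝ, 0 < C ∧ ∀ B₁ B₂ : ℝ, 0 < B₁ → 0 < B₂ →
      volume {x : ℝ × ℝ × ℝ |
          Real.sqrt ((0:ℝ) ^ 2 + 1 ^ 2 + x.2.1 ^ 2 + x.2.2 ^ 2) ≤ B₁ ∧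
          Real.sqrt (((0:ℝ) ^ 2 + 1 ^ 2 + x.2.1 ^ 2 + x.2.2 ^ 2) *
              ((-1:ℝ) ^ 2 + 0 ^ 2 + x.1 ^ 2 + x.2.1 ^ 2) -
            ((0:ℝ) * (-1) + 1 * 0 + x.2.1 * (-x.1) + x.2.2 * (-x.2.1)) ^ 2) ≤ B₂} ≤
        ENNReal.ofReal (C * (B₁ * B₂) ^ ((1:ℝ) + ε)) := by
  intro ε hε
  refine ⟨8 * (3 ^ ε / ε), by positivity, ?_⟩
  intro B₁ B₂ hB₁ hB₂
  set S := {x : ℝ × ℝ × ℝ |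
          Real.sqrt ((0:ℝ) ^ 2 + 1 ^ 2 + x.2.1 ^ 2 + x.2.2 ^ 2) ≤ B₁ ∧
          Real.sqrt (((0:ℝ) ^ 2 + 1 ^ 2 + x.2.1 ^ 2 + x.2.2 ^ 2) *
              ((-1:ℝ) ^ 2 + 0 ^ 2 + x.1 ^ 2 + x.2.1 ^ 2) -
            ((0:ℝ) * (-1) + 1 * 0 + x.2.1 * (-x.1) + x.2.2 * (-x.2.1)) ^ 2) ≤ B₂} with hS
  have key : ∀ x ∈ S, 1 + x.2.1 ^ 2 + x.2.2 ^ 2 ≤ B₁ ^ 2 ∧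
      1 + x.1 ^ 2 + (x.1 * x.2.2 - x.2.1 ^ 2) ^ 2 ≤ B₂ ^ 2 := by
    rintro ⟨a, b, c⟩ ⟨h1, h2⟩
    rw [Real.sqrt_le_left hB₁.le] at h1
    rw [Real.sqrt_le_left hB₂.le] at h2
    dsimp only at h1 h2 ⊢
    constructor
    · linarith
    · nlinarith [sq_nonneg b, sq_nonneg c]
  by_cases hne : S.Nonempty
  · obtain ⟨x, hx⟩ := hne
    obtain ⟨k1, k2⟩ := key x hx
    have h1 : 1 ≤ B₁ := by
      by_contra! h
      nlinarith [sq_nonneg x.2.1, sq_nonneg x.2.2]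
    have h2 : 1 ≤ B₂ := by
      by_contra! h
      nlinarith [sq_nonneg x.1, sq_nonneg (x.1 * x.2.2 - x.2.1 ^ 2)]
    refine le_trans (measure_mono ?_) (le_trans (sp4_aux_vol B₁ B₂ h1 hB₂) ?_)
    · intro y hy
      obtain ⟨k1, k2⟩ := key y hy
      refine ⟨?_, ?_, sp4_aux_section _ _ _ _ hB₂ (by linarith)⟩
      · exact abs_le.1 (abs_le_of_sq_le_sq (by nlinarith [sq_nonneg y.2.2]) hB₁.le)
      · exact abs_le.1 (abs_le_of_sq_le_sq (by nlinarith [sq_nonneg y.2.1]) hB₁.le)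
    · apply ENNReal.ofReal_le_ofReal
      have ha := sp4_aux_arsinh ε B₁ hε h1
      have hp : (1:ℝ) ≤ B₂ ^ ε := Real.one_le_rpow h2 hε.le
      have hq : 0 ≤ 3 ^ ε / ε * B₁ ^ ε := by positivity
      rw [Real.rpow_add (by positivity), Real.rpow_one, Real.mul_rpow hB₁.le hB₂.le]
      calc 2 * B₁ * (2 * B₂) * (2 * Real.arsinh B₁)
          = 8 * (B₁ * B₂) * Real.arsinh B₁ := by ring
        _ ≤ 8 * (B₁ * B₂) * (3 ^ ε / ε * B₁ ^ ε * B₂ ^ ε) := by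
            apply mul_le_mul_of_nonneg_left _ (by positivity)
            exact ha.trans (le_mul_of_one_le_right hq hp)
        _ = _ := by ring
  · rw [Set.not_nonempty_iff_eq_empty.1 hne]; simp
end

section
/- Let b ≥ 1 and let I ⊆ ℝ be an interval of length |I| ≥ 1. Then the two-dimensional Lebesgue measure of the set {(x, y) ∈ [−b, b]² : x·y ∈ I} is at most 4·|I|·(1 + log b). -/
open MeasureTheory

lemma hrvb_pos (c b : ℝ) (hc : 0 < c) (hcb : c ≤ b) :
    ∫⁻ x in Set.Ioc c b, ENNReal.ofReal |x⁻¹| = ENNReal.ofReal (Real.log (b / c)) := by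
  have h1 : ∫⁻ x in Set.Ioc c b, ENNReal.ofReal |x⁻¹|
      = ∫⁻ x in Set.Ioc c b, ENNReal.ofReal (x⁻¹) := by
    apply setLIntegral_congr_fun measurableSet_Ioc
    intro x hx
    have : 0 < x := hc.trans hx.1
    simp only
    rw [abs_of_pos (inv_pos.2 this)]
  have hint : IntervalIntegrable (fun x : ℝ => x⁻¹) volume c b := by
    apply intervalIntegral.intervalIntegrable_inv
    · intro x hx
      rw [Set.uIcc_of_le hcb] at hx
      exact (hc.trans_le hx.1).ne'
    · exact continuousOn_id
  rw [h1, ← integral_inv_of_pos hc (hc.trans_le hcb), intervalIntegral.integral_of_le hcb,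
    ofReal_integral_eq_lintegral_ofReal]
  · exact (intervalIntegrable_iff_integrableOn_Ioc_of_le hcb).1 hint
  · filter_upwards [ae_restrict_mem measurableSet_Ioc] with x hx
    exact (inv_pos.2 (hc.trans hx.1)).le

lemma hrvb_neg (c b : ℝ) (hc : 0 < c) (hcb : c ≤ b) :
    ∫⁻ x in Set.Ico (-b) (-c), ENNReal.ofReal |x⁻¹| = ENNReal.ofReal (Real.log (b / c)) := by
  rw [← hrvb_pos c b hc hcb, ← lintegral_indicator measurableSet_Ioc,
    ← lintegral_indicator measurableSet_Ico,
    ← lintegral_neg_eq_self (μ := volume)]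
  congr 1
  ext x
  simp only [Set.indicator, Set.mem_Ico, Set.mem_Ioc, inv_neg, abs_neg]
  congr 1
  apply propext
  constructor <;> rintro ⟨h, h'⟩ <;> constructor <;> linarith

/-- Let `b ≥ 1` and let `I ⊆ ℝ` be an interval of length `≥ 1`. Then the Lebesgue measure
of `{(x,y) ∈ [−b,b]² : x·y ∈ I}` is at most `4·|I|·(1 + log b)`. -/
theorem hyperbola_region_volume_bound
    (b : ℝ) (hb : 1 ≤ b) (I : Set ℝ) (hI : I.OrdConnected)
    (hlen : 1 ≤ volume I) :
    volume {p : ℝ × ℝ | p.1 ∈ Set.Icc (-b) b ∧ p.2 ∈ Set.Icc (-b) b ∧ p.1 * p.2 ∈ I} ≤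
      4 * volume I * ENNReal.ofReal (1 + Real.log b) := by
  have hb0 : 0 < b := by linarith
  have hc : 0 < b⁻¹ := inv_pos.2 hb0
  have hcb : b⁻¹ ≤ b := (inv_le_one_of_one_le₀ hb).trans hb
  have hlog : 0 ≤ Real.log b := Real.log_nonneg hb
  have hIm : MeasurableSet I := hI.measurableSet
  have hm : MeasurableSet {p : ℝ × ℝ | p.1 ∈ Set.Icc (-b) b ∧ p.2 ∈ Set.Icc (-b) b ∧
      p.1 * p.2 ∈ I} :=
    (measurable_fst measurableSet_Icc).inter ((measurable_snd measurableSet_Icc).inter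
      ((measurable_fst.mul measurable_snd) hIm))
  rw [Measure.volume_eq_prod, Measure.prod_apply hm]
  let g : ℝ → ENNReal := fun x => ENNReal.ofReal |x⁻¹| * volume I
  have hgm : Measurable g := by
    have : Measurable (fun x : ℝ => |x⁻¹|) := by
      simpa [Real.norm_eq_abs] using (measurable_inv (G := ℝ)).norm
    exact this.ennreal_ofReal.mul_const _
  have hg' : Measurable (fun x : ℝ => ENNReal.ofReal |x⁻¹|) := by
    have : Measurable (fun x : ℝ => |x⁻¹|) := by
      simpa [Real.norm_eq_abs] using (measurable_inv (G := ℝ)).norm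
    exact this.ennreal_ofReal
  calc _ ≤ ∫⁻ x, ((Set.Icc (-b⁻¹) b⁻¹).indicator (fun _ => ENNReal.ofReal (2 * b)) x
        + (Set.Ioc b⁻¹ b).indicator g x) + (Set.Ico (-b) (-b⁻¹)).indicator g x := by
        apply lintegral_mono
        intro x
        simp only
        have key : x ≠ 0 → volume (Prod.mk x ⁻¹' {p : ℝ × ℝ | p.1 ∈ Set.Icc (-b) b ∧
            p.2 ∈ Set.Icc (-b) b ∧ p.1 * p.2 ∈ I}) ≤ g x := by
          intro hx
          simp only [g]
          rw [← Real.volume_preimage_mul_left hx]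
          exact measure_mono fun y hy => hy.2.2
        by_cases h1 : x ∈ Set.Icc (-b⁻¹) b⁻¹
        · rw [Set.indicator_of_mem h1, add_assoc]
          refine le_trans ?_ le_self_add
          refine (measure_mono (t := Set.Icc (-b) b) fun y hy => hy.2.1).trans ?_
          rw [Real.volume_Icc]
          apply le_of_eq; congr 1; ring
        by_cases h2 : x ∈ Set.Ioc b⁻¹ b
        · rw [Set.indicator_of_mem h2]
          exact (key (hc.trans h2.1).ne').trans (le_add_self.trans le_self_add)
        by_cases h3 : x ∈ Set.Ico (-b) (-b⁻¹)
        · rw [Set.indicator_of_mem h3]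
          exact (key (by have := h3.2; intro h; linarith)).trans le_add_self
        · refine le_trans (le_of_eq ?_) zero_le
          convert measure_empty (μ := (volume : Measure ℝ))
          ext y
          simp only [Set.mem_preimage, Set.mem_setOf_eq, Set.mem_empty_iff_false, iff_false]
          rintro ⟨⟨h, h'⟩, -⟩
          simp only [Set.mem_Icc, Set.mem_Ioc, Set.mem_Ico, not_and_or, not_le, not_lt] at h1 h2 h3
          rcases h1 with h1 | h1 <;> rcases h2 with h2 | h2 <;> rcases h3 with h3 | h3 <;> linarith
    _ = 4 + ENNReal.ofReal (2 * Real.log b) * volume I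
          + ENNReal.ofReal (2 * Real.log b) * volume I := by
        have hl : Real.log (b / b⁻¹) = 2 * Real.log b := by
          rw [Real.log_div hb0.ne' hc.ne', Real.log_inv]; ring
        rw [lintegral_add_right _ (hgm.indicator measurableSet_Ico),
          lintegral_add_right _ (hgm.indicator measurableSet_Ioc),
          lintegral_indicator measurableSet_Ioc, lintegral_indicator measurableSet_Ico,
          lintegral_indicator measurableSet_Icc, lintegral_mul_const _ hg',
          lintegral_mul_const _ hg', hrvb_pos _ _ hc hcb, hrvb_neg _ _ hc hcb, hl,
          setLIntegral_const, Real.volume_Icc, ← ENNReal.ofReal_mul (by positivity)]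
        congr 2
        have : 2 * b * (b⁻¹ - -b⁻¹) = 4 := by field_simp; norm_num
        rw [this]; norm_num
    _ ≤ 4 * volume I + ENNReal.ofReal (2 * Real.log b) * volume I
          + ENNReal.ofReal (2 * Real.log b) * volume I := by
        gcongr
        calc (4 : ENNReal) = 4 * 1 := by simp
          _ ≤ _ := by gcongr
    _ = _ := by
        rw [ENNReal.ofReal_add (by norm_num) hlog, ENNReal.ofReal_mul (by norm_num)]
        simp only [ENNReal.ofReal_one, ENNReal.ofReal_ofNat]
        ring
end

section
/- Let p be a prime and let r, c, d be integers with 0 ≤ c ≤ d and 2d ≤ r. Define 𝔖 = ∑ e(a/p^c + b₃/p^{2d}), where the sum runs over all integers a, b₁, b₂, b₃ with 0 ≤ a < p^d and 0 ≤ b₁, b₂, b₃ < p^r, subject to the divisibility conditions p^d | b₂, p^d | b₃, p^{c+d} | (b₁·p^d − a·b₂), and p^{c+d} | (b₂·p^d − a·b₃). Then 𝔖 = p^{3r} if (c,d) = (0,0); 𝔖 = −p^{3r−4} if (c,d) = (1,1); and 𝔖 = 0 otherwise. -/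
lemma sum_range_shift (f : ℕ → ℂ) (N : ℕ) (hf : ∀ n, f (n + N) = f n) (s : ℕ) :
    ∑ n ∈ Finset.range N, f (n + s) = ∑ n ∈ Finset.range N, f n := by
  induction s with
  | zero => rfl
  | succ s ih =>
    rw [← ih]
    have h1 := Finset.sum_range_succ (fun n => f (n + s)) N
    have h2 := Finset.sum_range_succ' (fun n => f (n + s)) N
    have h3 : f (N + s) = f (0 + s) := by rw [add_comm, hf, zero_add]
    rw [h1, h3] at h2
    have h4 := add_right_cancel h2
    rw [h4]
    refine Finset.sum_congr rfl fun n _ => ?_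
    congr 1
    ring

lemma sum_range_vanish (f : ℕ → ℂ) (N : ℕ) (hf : ∀ n, f (n + N) = f n) (s : ℕ) (z : ℂ)
    (hz : z ≠ 1) (hs : ∀ n, f (n + s) = z * f n) :
    ∑ n ∈ Finset.range N, f n = 0 := by
  have h := sum_range_shift f N hf s
  simp only [hs] at h
  rw [← Finset.mul_sum] at h
  have : (z - 1) * ∑ n ∈ Finset.range N, f n = 0 := by linear_combination h
  rcases mul_eq_zero.1 this with h | h
  · exact absurd (sub_eq_zero.1 h) hz
  · exact h

lemma exp_ne_one (p : ℕ) (hp : p.Prime) (j : ℕ) (hj : 0 < j) :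
    Complex.exp (2 * Real.pi * Complex.I * (1 / (p : ℂ) ^ j)) ≠ 1 := by
  intro h
  have hprim := Complex.isPrimitiveRoot_exp (p ^ j) (pow_ne_zero _ hp.ne_zero)
  have h1 : Complex.exp (2 * Real.pi * Complex.I / ((p ^ j : ℕ) : ℂ)) = 1 := by
    rw [← h]; congr 1; push_cast; ring
  rw [h1] at hprim
  have := hprim.unique IsPrimitiveRoot.one
  have h2 := Nat.one_lt_pow hj.ne' hp.one_lt
  omega

lemma exp_nat (n : ℕ) : Complex.exp (2 * Real.pi * Complex.I * n) = 1 := by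
  rw [Complex.exp_eq_one_iff]; exact ⟨n, by push_cast; ring⟩

lemma count_sum (m k v : ℕ) (hm : 0 < m) :
    ∑ n ∈ Finset.range (m * k), (if n ≡ v [MOD m] then (1 : ℂ) else 0) = k := by
  rw [Finset.sum_boole, ← Nat.count_eq_card_filter_range, Nat.count_modEq_card _ hm]
  simp [hm]

/-- b3 sum vanishes -/
lemma b3_vanish (p : ℕ) (hp : p.Prime) (r c d k a b1 b2 : ℕ) (hcd : c ≤ d) (hdr : 2 * d ≤ r)
    (hk : k < d) (hak : p ^ c ∣ a * p ^ k) :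
    ∑ b3 ∈ Finset.range (p ^ r),
        (if p ^ d ∣ b2 ∧ p ^ d ∣ b3 ∧
            ((p : ℤ) ^ (c + d) ∣ ((b1 : ℤ) * (p : ℤ) ^ d - (a : ℤ) * (b2 : ℤ))) ∧
            ((p : ℤ) ^ (c + d) ∣ ((b2 : ℤ) * (p : ℤ) ^ d - (a : ℤ) * (b3 : ℤ))) then
          Complex.exp (2 * Real.pi * Complex.I *
            ((a : ℂ) / (p : ℂ) ^ c + (b3 : ℂ) / (p : ℂ) ^ (2 * d)))
        else 0) = 0 := by
  have hp0 : (p : ℂ) ≠ 0 := by exact_mod_cast hp.ne_zero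
  have key : ∀ s n : ℕ, p ^ d ∣ s → p ^ (c + d) ∣ a * s →
      ((p ^ d ∣ b2 ∧ p ^ d ∣ (n + s) ∧
            ((p : ℤ) ^ (c + d) ∣ ((b1 : ℤ) * (p : ℤ) ^ d - (a : ℤ) * (b2 : ℤ))) ∧
            ((p : ℤ) ^ (c + d) ∣ ((b2 : ℤ) * (p : ℤ) ^ d - (a : ℤ) * ((n + s : ℕ) : ℤ)))) ↔
      (p ^ d ∣ b2 ∧ p ^ d ∣ n ∧
            ((p : ℤ) ^ (c + d) ∣ ((b1 : ℤ) * (p : ℤ) ^ d - (a : ℤ) * (b2 : ℤ))) ∧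
            ((p : ℤ) ^ (c + d) ∣ ((b2 : ℤ) * (p : ℤ) ^ d - (a : ℤ) * (n : ℤ))))) := by
    intro s n h1 h2
    have h2' : (p : ℤ) ^ (c + d) ∣ (a : ℤ) * s := by exact_mod_cast h2
    rw [Nat.dvd_add_left h1]
    have : (b2 : ℤ) * (p : ℤ) ^ d - (a : ℤ) * ((n + s : ℕ) : ℤ)
      = ((b2 : ℤ) * (p : ℤ) ^ d - (a : ℤ) * (n : ℤ)) - (a : ℤ) * s := by push_cast; ring
    rw [this, dvd_sub_left h2']
  refine sum_range_vanish _ _ ?_ (p ^ (d + k))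
    (Complex.exp (2 * Real.pi * Complex.I * (1 / (p : ℂ) ^ (d - k))))
    (exp_ne_one p hp _ (by omega)) ?_
  · intro n
    simp only [key (p ^ r) n (pow_dvd_pow _ (by omega))
      ((pow_dvd_pow _ (by omega)).mul_left _)]
    congr 1
    obtain ⟨e, rfl⟩ := Nat.exists_eq_add_of_le hdr
    rw [← mul_one (Complex.exp (_ * ((a : ℂ) / p ^ c + (n : ℂ) / _))), ← exp_nat (p ^ e),
      ← Complex.exp_add]
    congr 1
    push_cast
    rw [pow_add]
    field_simp
    try ring
  · intro n
    simp only [key (p ^ (d + k)) n (pow_dvd_pow _ (by omega))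
      (by rw [pow_add, pow_add, mul_comm (p ^ c), mul_left_comm]; exact mul_dvd_mul_left _ hak)]
    rw [mul_ite, mul_zero, ← Complex.exp_add]
    congr 2
    obtain ⟨e, rfl⟩ := Nat.exists_eq_add_of_le hk.le
    have : k + e - k = e := by omega
    rw [this]
    push_cast
    field_simp
    ring

lemma a_unit (p : ℕ) (hp : p.Prime) (r d a : ℕ) (hdr : 2 * d ≤ r) (ha : ¬ p ∣ a) :
    (∑ b1 ∈ Finset.range (p ^ r),
      ∑ b2 ∈ Finset.range (p ^ r), ∑ b3 ∈ Finset.range (p ^ r),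
        if p ^ d ∣ b2 ∧ p ^ d ∣ b3 ∧
            ((p : ℤ) ^ (d + d) ∣ ((b1 : ℤ) * (p : ℤ) ^ d - (a : ℤ) * (b2 : ℤ))) ∧
            ((p : ℤ) ^ (d + d) ∣ ((b2 : ℤ) * (p : ℤ) ^ d - (a : ℤ) * (b3 : ℤ))) then
          Complex.exp (2 * Real.pi * Complex.I *
            ((a : ℂ) / (p : ℂ) ^ d + (b3 : ℂ) / (p : ℂ) ^ (2 * d)))
        else 0) = (p : ℂ) ^ (3 * r - 4 * d) *
          Complex.exp (2 * Real.pi * Complex.I * ((a : ℂ) / (p : ℂ) ^ d)) := by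
  have hp0 : (p : ℂ) ≠ 0 := by exact_mod_cast hp.ne_zero
  have hpz : (p : ℤ) ≠ 0 := by exact_mod_cast hp.ne_zero
  have hpd : ∀ j, 0 < p ^ j := fun j => pow_pos hp.pos j
  have step : ∀ b1 b2 b3 : ℕ, (if p ^ d ∣ b2 ∧ p ^ d ∣ b3 ∧
            ((p : ℤ) ^ (d + d) ∣ ((b1 : ℤ) * (p : ℤ) ^ d - (a : ℤ) * (b2 : ℤ))) ∧
            ((p : ℤ) ^ (d + d) ∣ ((b2 : ℤ) * (p : ℤ) ^ d - (a : ℤ) * (b3 : ℤ))) then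
          Complex.exp (2 * Real.pi * Complex.I *
            ((a : ℂ) / (p : ℂ) ^ d + (b3 : ℂ) / (p : ℂ) ^ (2 * d)))
        else 0) = Complex.exp (2 * Real.pi * Complex.I * ((a : ℂ) / (p : ℂ) ^ d)) *
        ((if b2 ≡ 0 [MOD p ^ d] then 1 else 0) * (if b1 ≡ a * (b2 / p ^ d) [MOD p ^ d] then 1 else 0)
          * (if b3 ≡ 0 [MOD p ^ (2 * d)] then 1 else 0)) := by
    intro b1 b2 b3
    simp only [Nat.modEq_zero_iff_dvd]
    by_cases h2 : p ^ d ∣ b2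
    swap
    · simp [h2]
    obtain ⟨t, rfl⟩ := h2
    rw [Nat.mul_div_cancel_left _ (hpd d)]
    have e1 : ((p : ℤ) ^ (d + d) ∣ ((b1 : ℤ) * (p : ℤ) ^ d - (a : ℤ) * ((p ^ d * t : ℕ) : ℤ))) ↔
        b1 ≡ a * t [MOD p ^ d] := by
      have : (b1 : ℤ) * (p : ℤ) ^ d - (a : ℤ) * ((p ^ d * t : ℕ) : ℤ)
        = (p : ℤ) ^ d * ((b1 : ℤ) - a * t) := by push_cast; ring
      rw [this, pow_add, mul_dvd_mul_iff_left (pow_ne_zero _ hpz), Nat.ModEq.comm,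
        Nat.modEq_iff_dvd]
      push_cast
      rfl
    have e2 : ((p : ℤ) ^ (d + d) ∣ (((p ^ d * t : ℕ) : ℤ) * (p : ℤ) ^ d - (a : ℤ) * (b3 : ℤ))) ↔
        p ^ (2 * d) ∣ b3 := by
      rw [dvd_sub_right ⟨(t : ℤ), by push_cast; ring⟩, ← two_mul]
      have hco : Nat.Coprime (p ^ (2 * d)) a :=
        Nat.Coprime.pow_left _ ((Nat.Prime.coprime_iff_not_dvd hp).2 ha)
      rw [← hco.dvd_mul_left]
      exact_mod_cast Iff.rfl
    simp only [e1, e2]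
    by_cases h3 : p ^ (2 * d) ∣ b3
    swap
    · simp [h3]
    have h3' : p ^ d ∣ b3 := (pow_dvd_pow _ (by omega)).trans h3
    by_cases h1 : b1 ≡ a * t [MOD p ^ d]
    swap
    · simp [h1]
    obtain ⟨u, rfl⟩ := h3
    simp only [h1, h3', dvd_mul_right, and_self, if_true, mul_one]
    conv_rhs => rw [← mul_one (Complex.exp _), ← exp_nat u, ← Complex.exp_add]
    congr 1
    push_cast
    field_simp
  simp only [step, ← Finset.mul_sum, ]
  rw [Finset.sum_comm]
  have c3 : ∑ n ∈ Finset.range (p ^ r), (if n ≡ 0 [MOD p ^ (2 * d)] then (1 : ℂ) else 0)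
      = (p : ℂ) ^ (r - 2 * d) := by
    have := count_sum (p ^ (2 * d)) (p ^ (r - 2 * d)) 0 (hpd _)
    rw [← pow_add, show 2 * d + (r - 2 * d) = r by omega] at this
    rw [this]; push_cast; rfl
  have c1 : ∀ v, ∑ n ∈ Finset.range (p ^ r), (if n ≡ v [MOD p ^ d] then (1 : ℂ) else 0)
      = (p : ℂ) ^ (r - d) := by
    intro v
    have := count_sum (p ^ d) (p ^ (r - d)) v (hpd _)
    rw [← pow_add, show d + (r - d) = r by omega] at this
    rw [this]; push_cast; rfl
  simp only [c3, ← Finset.sum_mul, ← Finset.mul_sum, c1]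
  rw [show 3 * r - 4 * d = (r - d) + (r - d) + (r - 2 * d) by omega, pow_add, pow_add]
  ring

/-- Evaluation of the exponential sum `𝔖^{(r)}(c,d)` arising from Hecke coset
representatives for `Sp(4)`: for a prime `p` and `0 ≤ c ≤ d`, `2d ≤ r`, the sum
`∑ e(a/p^c + b₃/p^{2d})` over `0 ≤ a < p^d`, `0 ≤ b₁, b₂, b₃ < p^r` subject to
`p^d ∣ b₂`, `p^d ∣ b₃`, `p^{c+d} ∣ (b₁p^d − ab₂)`, `p^{c+d} ∣ (b₂p^d − ab₃)`
equals `p^{3r}` if `(c,d) = (0,0)`, `−p^{3r−4}` if `(c,d) = (1,1)`, and `0` otherwise. -/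
theorem sp4_hecke_exponential_sum_eval
    (p : ℕ) (hp : p.Prime) (r c d : ℕ) (hcd : c ≤ d) (hdr : 2 * d ≤ r) :
    (∑ a ∈ Finset.range (p ^ d), ∑ b1 ∈ Finset.range (p ^ r),
      ∑ b2 ∈ Finset.range (p ^ r), ∑ b3 ∈ Finset.range (p ^ r),
        if p ^ d ∣ b2 ∧ p ^ d ∣ b3 ∧
            ((p : ℤ) ^ (c + d) ∣ ((b1 : ℤ) * (p : ℤ) ^ d - (a : ℤ) * (b2 : ℤ))) ∧
            ((p : ℤ) ^ (c + d) ∣ ((b2 : ℤ) * (p : ℤ) ^ d - (a : ℤ) * (b3 : ℤ))) then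
          Complex.exp (2 * Real.pi * Complex.I *
            ((a : ℂ) / (p : ℂ) ^ c + (b3 : ℂ) / (p : ℂ) ^ (2 * d)))
        else 0)
    = if c = 0 ∧ d = 0 then (p : ℂ) ^ (3 * r)
      else if c = 1 ∧ d = 1 then -(p : ℂ) ^ (3 * r - 4)
      else 0 := by
  have hp0 : (p : ℂ) ≠ 0 := by exact_mod_cast hp.ne_zero
  rcases Nat.lt_or_ge c d with hlt | hge
  · rw [if_neg (by omega), if_neg (by omega)]
    refine Finset.sum_eq_zero fun a _ => Finset.sum_eq_zero fun b1 _ =>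
      Finset.sum_eq_zero fun b2 _ => ?_
    exact b3_vanish p hp r c d c a b1 b2 hcd hdr hlt (dvd_mul_left _ _)
  obtain rfl : c = d := le_antisymm hcd hge
  rcases Nat.eq_zero_or_pos c with rfl | hc
  · have h : ∀ n : ℕ, Complex.exp (2 * Real.pi * Complex.I * n) = 1 := exp_nat
    simp [h]
    ring
  rw [if_neg (by omega)]
  have main : ∀ a : ℕ, (∑ b1 ∈ Finset.range (p ^ r),
      ∑ b2 ∈ Finset.range (p ^ r), ∑ b3 ∈ Finset.range (p ^ r),
        if p ^ c ∣ b2 ∧ p ^ c ∣ b3 ∧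
            ((p : ℤ) ^ (c + c) ∣ ((b1 : ℤ) * (p : ℤ) ^ c - (a : ℤ) * (b2 : ℤ))) ∧
            ((p : ℤ) ^ (c + c) ∣ ((b2 : ℤ) * (p : ℤ) ^ c - (a : ℤ) * (b3 : ℤ))) then
          Complex.exp (2 * Real.pi * Complex.I *
            ((a : ℂ) / (p : ℂ) ^ c + (b3 : ℂ) / (p : ℂ) ^ (2 * c)))
        else 0) = (p : ℂ) ^ (3 * r - 4 * c) * (if p ∣ a then 0 else
          Complex.exp (2 * Real.pi * Complex.I * ((a : ℂ) / (p : ℂ) ^ c))) := by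
    intro a
    by_cases ha : p ∣ a
    · rw [if_pos ha, mul_zero]
      refine Finset.sum_eq_zero fun b1 _ =>
        Finset.sum_eq_zero fun b2 _ => ?_
      refine b3_vanish p hp r c c (c - 1) a b1 b2 hcd hdr (by omega) ?_
      obtain ⟨t, rfl⟩ := ha
      refine ⟨t, ?_⟩
      obtain ⟨e, rfl⟩ := Nat.exists_eq_add_of_le hc
      rw [show 1 + e - 1 = e by omega]
      ring
    · rw [if_neg ha]
      exact a_unit p hp r c a hdr ha
  simp only [main, ← Finset.mul_sum]
  have per : ∀ n : ℕ, Complex.exp (2 * Real.pi * Complex.I * (((n + p ^ c : ℕ) : ℂ) / (p : ℂ) ^ c))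
      = Complex.exp (2 * Real.pi * Complex.I * ((n : ℂ) / (p : ℂ) ^ c)) := by
    intro n
    conv_rhs => rw [← mul_one (Complex.exp _), ← exp_nat 1, ← Complex.exp_add]
    congr 1
    push_cast
    field_simp
  have shift : ∀ n : ℕ,
      Complex.exp (2 * Real.pi * Complex.I * (((n + p ^ (c - 1) : ℕ) : ℂ) / (p : ℂ) ^ c))
      = Complex.exp (2 * Real.pi * Complex.I * (1 / (p : ℂ) ^ 1)) *
        Complex.exp (2 * Real.pi * Complex.I * ((n : ℂ) / (p : ℂ) ^ c)) := by
    intro n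
    rw [← Complex.exp_add]
    congr 1
    obtain ⟨e, rfl⟩ := Nat.exists_eq_add_of_le hc
    rw [show 1 + e - 1 = e by omega]
    push_cast
    field_simp
    ring
  by_cases h1 : c = 1
  · subst h1
    rw [if_pos ⟨rfl, rfl⟩]
    have hz := sum_range_vanish
      (fun n : ℕ => Complex.exp (2 * Real.pi * Complex.I * ((n : ℂ) / (p : ℂ) ^ 1))) (p ^ 1)
      per _ _ (exp_ne_one p hp 1 one_pos) shift
    have hs : ∑ i ∈ Finset.range (p ^ 1), (if p ∣ i then 0 else
        Complex.exp (2 * Real.pi * Complex.I * ((i : ℂ) / (p : ℂ) ^ 1))) = -1 := by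
      rw [pow_one] at hz ⊢
      obtain ⟨q, hq⟩ := Nat.exists_eq_succ_of_ne_zero hp.ne_zero
      have hr : Finset.range p = Finset.range (q + 1) := by rw [hq]
      rw [hr, Finset.sum_range_succ'] at hz ⊢
      rw [if_pos (by simp)]
      have : ∀ i ∈ Finset.range q, (if p ∣ i + 1 then 0 else
        Complex.exp (2 * Real.pi * Complex.I * (((i + 1 : ℕ) : ℂ) / (p : ℂ) ^ 1)))
          = Complex.exp (2 * Real.pi * Complex.I * (((i + 1 : ℕ) : ℂ) / (p : ℂ) ^ 1)) := by
        intro i hi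
        rw [if_neg]
        intro hd
        have := Nat.le_of_dvd (by omega) hd
        have := Finset.mem_range.1 hi
        omega
      rw [Finset.sum_congr rfl this]
      simp only [Nat.cast_zero, zero_div, mul_zero, Complex.exp_zero] at hz
      linear_combination hz
    rw [hs]
    ring
  · rw [if_neg (by omega)]
    rw [sum_range_vanish _ (p ^ c) ?_ (p ^ (c - 1)) _ (exp_ne_one p hp 1 one_pos) ?_, mul_zero]
    · intro n
      simp only [per, Nat.dvd_add_left (dvd_pow_self p (show c ≠ 0 by omega))]
    · intro n
      simp only [shift, Nat.dvd_add_left (dvd_pow_self p (show c - 1 ≠ 0 by omega)), mul_ite,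
        mul_zero]
end

section
/- Let x be a 4×4 real upper-triangular matrix with all diagonal entries equal to 1, and let w be a 4×4 signed permutation matrix (each row and each column of w has exactly one nonzero entry, equal to ±1). Then every row of the product w·x has Euclidean norm at least 1, and for any two distinct rows u, v of w·x the Gram determinant ‖u‖²·‖v‖² − ⟨u,v⟩² is at least 1. -/
theorem gram_ge_minor (u v : Fin 4 → ℝ) (p q : Fin 4) (h : p < q) :
    (u p * v q - u q * v p) ^ 2 ≤
      (∑ k, (u k) ^ 2) * (∑ k, (v k) ^ 2) - (∑ k, u k * v k) ^ 2 := by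
  have e : (∑ k, (u k) ^ 2) * (∑ k, (v k) ^ 2) - (∑ k, u k * v k) ^ 2 =
      (u 0 * v 1 - u 1 * v 0) ^ 2 + (u 0 * v 2 - u 2 * v 0) ^ 2 + (u 0 * v 3 - u 3 * v 0) ^ 2
      + (u 1 * v 2 - u 2 * v 1) ^ 2 + (u 1 * v 3 - u 3 * v 1) ^ 2
      + (u 2 * v 3 - u 3 * v 2) ^ 2 := by
    simp only [Fin.sum_univ_four]; ring
  rw [e]
  have h1 := sq_nonneg (u 0 * v 1 - u 1 * v 0)
  have h2 := sq_nonneg (u 0 * v 2 - u 2 * v 0)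
  have h3 := sq_nonneg (u 0 * v 3 - u 3 * v 0)
  have h4 := sq_nonneg (u 1 * v 2 - u 2 * v 1)
  have h5 := sq_nonneg (u 1 * v 3 - u 3 * v 1)
  have h6 := sq_nonneg (u 2 * v 3 - u 3 * v 2)
  fin_cases p <;> fin_cases q <;> first | (exact absurd h (by decide)) | (simp only [Fin.zero_eta, Fin.mk_one, Fin.reduceFinMk]; linarith)

/-- Let `x` be a `4×4` real upper-triangular matrix with unit diagonal and `w` a signed
permutation matrix. Then every row of `w·x` has Euclidean norm at least `1`, and for any
two distinct rows `u, v` of `w·x` the Gram determinant `‖u‖²‖v‖² − ⟨u,v⟩²` is at least `1`. -/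
theorem signed_permutation_unipotent_row_bounds
    (x w : Matrix (Fin 4) (Fin 4) ℝ)
    (hxdiag : ∀ i, x i i = 1)
    (hxlow : ∀ i j, j < i → x i j = 0)
    (hwrow : ∀ i, ∃ j, (w i j = 1 ∨ w i j = -1) ∧ ∀ k, k ≠ j → w i k = 0)
    (hwcol : ∀ j, ∃ i, (w i j = 1 ∨ w i j = -1) ∧ ∀ k, k ≠ i → w k j = 0) :
    (∀ i, 1 ≤ Real.sqrt (∑ k, ((w * x) i k) ^ 2)) ∧
    (∀ i j, i ≠ j →
      1 ≤ (∑ k, ((w * x) i k) ^ 2) * (∑ k, ((w * x) j k) ^ 2) -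
        (∑ k, (w * x) i k * (w * x) j k) ^ 2) := by
  have key : ∀ i, ∃ p, (w i p) ^ 2 = 1 ∧ ∀ k, (w * x) i k = w i p * x p k := by
    intro i
    obtain ⟨p, hp, h0⟩ := hwrow i
    refine ⟨p, by rcases hp with h | h <;> rw [h] <;> norm_num, fun k => ?_⟩
    rw [Matrix.mul_apply]
    exact Finset.sum_eq_single p (fun b _ hb => by rw [h0 b hb, zero_mul])
      (fun h => absurd (Finset.mem_univ _) h)
  have aux : ∀ i j p q, p < q → (w i p) ^ 2 = 1 → (w j q) ^ 2 = 1 →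
      (∀ k, (w * x) i k = w i p * x p k) → (∀ k, (w * x) j k = w j q * x q k) →
      1 ≤ (∑ k, ((w * x) i k) ^ 2) * (∑ k, ((w * x) j k) ^ 2) -
        (∑ k, (w * x) i k * (w * x) j k) ^ 2 := by
    intro i j p q hpq h1 h2 hi hj
    refine le_trans (le_of_eq ?_) (gram_ge_minor ((w * x) i) ((w * x) j) p q hpq)
    rw [hi, hi, hj, hj, hxdiag, hxdiag, hxlow q p hpq, mul_zero, mul_zero, sub_zero, mul_one,
      mul_one, mul_pow, h1, h2, mul_one]
  constructor
  · intro i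
    obtain ⟨p, hp, h⟩ := key i
    rw [Real.one_le_sqrt]
    have := Finset.single_le_sum (f := fun k => ((w * x) i k) ^ 2)
      (fun k _ => sq_nonneg _) (Finset.mem_univ p)
    simp only [h p, hxdiag, mul_one, hp] at this
    exact this
  · intro i j hij
    obtain ⟨p, hp, hi⟩ := key i
    obtain ⟨q, hq, hj⟩ := key j
    rcases lt_trichotomy p q with h | h | h
    · exact aux i j p q h hp hq hi hj
    · exfalso
      subst h
      obtain ⟨r, _, hr⟩ := hwcol p
      have a : i = r := by
        by_contra hne
        rw [hr i hne] at hp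
        norm_num at hp
      have b : j = r := by
        by_contra hne
        rw [hr j hne] at hq
        norm_num at hq
      exact hij (a.trans b.symm)
    · have := aux j i q p h hq hp hj hi
      simp only [mul_comm ((w * x) j _)] at this
      linarith
end
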